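/- arXiv:2001.04361 — 2 statements merged into one kernel-verified Lean document; each statement's English description precedes it below -/
import Mathlib

section
/- Let d ≥ 1 and let K ⊆ ℝ^d be a closed symmetric convex set. Then the polar of the spectral set Λ(K), taken in the space of real symmetric d×d matrices with the Frobenius inner product, equals the spectral set of the polar of K; that is, (Λ(K))° = Λ(K°). -/
/-!
Everything is reduced to diagonalizations `A = U diag(a) Uᵀ`, `B = V diag(b) Vᵀ`, since for a
symmetric set `K` the matrix `U diag(a) Uᵀ` lies in `Λ(K)` exactly when `a ∈ K`
(`mem_spectralSet_conj_diagonal`).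

Then `tr(AB) = ⟨b, M a⟩`, where `M` is the entrywise square of the orthogonal matrix `Vᵀ U`
(`trace_conj_diagonal_mul`). Taking `U = V` gives `M = 1`, so testing `B` against `Λ(K)` tests `b`
against all of `K`; this is `(Λ(K))° ⊆ Λ(K°)`. Conversely `M` is always doubly stochastic, so by
Birkhoff's theorem `M a` is a convex combination of rearrangements of `a`, hence lies in `K`
(`mulVec_mem_of_mem_doublyStochastic`), and `⟨b, M a⟩ ≤ 1` for `b ∈ K°`.
-/

open Matrix Finset Pointwise

/-- The vector of eigenvalues of a real symmetric `d × d` matrix, listed in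
non-increasing order (junk value `0` if the matrix is not symmetric). -/
noncomputable def eigVec {d : ℕ} (A : Matrix (Fin d) (Fin d) ℝ) : Fin d → ℝ :=
  if hA : A.IsHermitian then fun i => hA.eigenvalues (Tuple.sort hA.eigenvalues i.rev) else 0

/-- A set `K ⊆ ℝ^d` is symmetric if it is invariant under all coordinate permutations. -/
def IsSymmSet {d : ℕ} (K : Set (Fin d → ℝ)) : Prop :=
  ∀ σ : Equiv.Perm (Fin d), (fun p => p ∘ σ) '' K = K

/-- The spectral set `Λ(K) = {A ∈ S²ℝ^d : λ(A) ∈ K}` of a set `K ⊆ ℝ^d`,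
realized as the set of real symmetric matrices whose eigenvalue vector lies in `K`. -/
def SpectralSet {d : ℕ} (K : Set (Fin d → ℝ)) : Set (Matrix (Fin d) (Fin d) ℝ) :=
  {A | A.IsHermitian ∧ eigVec A ∈ K}

/-- Support function of a set of vectors, w.r.t. the standard inner product. -/
noncomputable def suppVec {d : ℕ} (K : Set (Fin d → ℝ)) (c : Fin d → ℝ) : ℝ :=
  sSup {t | ∃ p ∈ K, t = ∑ i, c i * p i}

/-- Support function of a set of symmetric matrices, w.r.t. the Frobenius inner
product `⟨A,B⟩ = tr(AB)`. -/
noncomputable def suppMat {d : ℕ} (C : Set (Matrix (Fin d) (Fin d) ℝ))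
    (B : Matrix (Fin d) (Fin d) ℝ) : ℝ :=
  sSup {t | ∃ A ∈ C, t = (A * B).trace}

/-- The polar of a set of vectors. -/
def polarVec {d : ℕ} (K : Set (Fin d → ℝ)) : Set (Fin d → ℝ) :=
  {y | ∀ p ∈ K, ∑ i, y i * p i ≤ 1}

/-- The polar of a set of symmetric matrices, taken inside the space of symmetric
matrices with the Frobenius inner product `⟨A,B⟩ = tr(AB)`. -/
def polarMat {d : ℕ} (C : Set (Matrix (Fin d) (Fin d) ℝ)) :
    Set (Matrix (Fin d) (Fin d) ℝ) :=
  {B | B.IsHermitian ∧ ∀ A ∈ C, (A * B).trace ≤ 1}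

/-- Two real tuples with the same multiset of values agree after sorting, hence are
rearrangements of each other. -/
lemma exists_perm_of_map_univ_eq {d : ℕ} {f g : Fin d → ℝ}
    (h : Multiset.map f univ.val = Multiset.map g univ.val) :
    ∃ σ : Equiv.Perm (Fin d), f = g ∘ σ := by
  rw [Fin.univ_val_map, Fin.univ_val_map, Multiset.coe_eq_coe] at h
  have hs : f ∘ Tuple.sort f = g ∘ Tuple.sort g :=
    List.ofFn_injective <|
      ((((Tuple.sort f).ofFn_comp_perm f).trans h).trans
        ((Tuple.sort g).ofFn_comp_perm g).symm).eq_of_pairwise'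
        (Tuple.monotone_sort f).sortedLE_ofFn.pairwise
        (Tuple.monotone_sort g).sortedLE_ofFn.pairwise
  refine ⟨(Tuple.sort f)⁻¹.trans (Tuple.sort g), ?_⟩
  funext i
  simpa using congrFun hs ((Tuple.sort f)⁻¹ i)

lemma IsSymmSet.comp_mem_iff {d : ℕ} {K : Set (Fin d → ℝ)} (hK : IsSymmSet K)
    (σ : Equiv.Perm (Fin d)) (p : Fin d → ℝ) : p ∘ σ ∈ K ↔ p ∈ K := by
  have key : ∀ (τ : Equiv.Perm (Fin d)) (q : Fin d → ℝ), q ∈ K → q ∘ τ ∈ K :=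
    fun τ q hq => hK τ ▸ Set.mem_image_of_mem _ hq
  refine ⟨fun h => ?_, key σ p⟩
  simpa [Function.comp_assoc] using key σ.symm _ h

lemma IsSymmSet.polar_symm {d : ℕ} {K : Set (Fin d → ℝ)} (hK : IsSymmSet K) :
    IsSymmSet (polarVec K) := by
  have key : ∀ (τ : Equiv.Perm (Fin d)) (y : Fin d → ℝ),
      y ∈ polarVec K → y ∘ τ ∈ polarVec K := by
    intro τ y hy p hp
    have := hy _ ((hK.comp_mem_iff τ.symm p).2 hp)
    rw [← Equiv.sum_comp τ] at this
    simpa using this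
  intro σ
  refine Set.Subset.antisymm ?_ fun y hy => ⟨y ∘ σ.symm, key _ _ hy, ?_⟩
  · rintro _ ⟨y, hy, rfl⟩
    exact key σ y hy
  · simp [Function.comp_assoc]

open Polynomial in
/-- Membership in a spectral set may be tested on any orthogonal diagonalization: the spectrum of
`V diag(p) Vᵀ`, with multiplicity, is `p`, so its sorted eigenvalue vector is a rearrangement
of `p`. -/
lemma mem_spectralSet_conj_diagonal {d : ℕ} {K : Set (Fin d → ℝ)} (hK : IsSymmSet K)
    {V : Matrix (Fin d) (Fin d) ℝ} (hV : Vᵀ * V = 1) (p : Fin d → ℝ) :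
    V * diagonal p * Vᵀ ∈ SpectralSet K ↔ p ∈ K := by
  have hH : (V * diagonal p * Vᵀ).IsHermitian := by
    rw [Matrix.IsHermitian, conjTranspose_eq_transpose_of_trivial]
    simp [Matrix.mul_assoc]
  have hroots : Multiset.map hH.eigenvalues univ.val = Multiset.map p univ.val := by
    have h1 := hH.roots_charpoly_eq_eigenvalues
    have h2 : (V * diagonal p * Vᵀ).charpoly = (Multiset.map (fun a => X - C a)
        (Multiset.map p univ.val)).prod := by
      rw [charpoly_mul_comm, ← Matrix.mul_assoc, hV, Matrix.one_mul, charpoly_diagonal,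
        Multiset.map_map]
      rfl
    rw [h2, Polynomial.roots_multiset_prod_X_sub_C] at h1
    exact h1.symm
  obtain ⟨σ, hσ⟩ := exists_perm_of_map_univ_eq hroots
  have he : eigVec (V * diagonal p * Vᵀ) =
      p ∘ (Fin.revPerm.trans ((Tuple.sort hH.eigenvalues).trans σ)) := by
    funext i
    rw [eigVec, dif_pos hH, congrFun hσ]
    rfl
  rw [SpectralSet, Set.mem_ofPred_eq, he, hK.comp_mem_iff]
  exact and_iff_right hH

lemma exists_conj_diagonal {d : ℕ} {A : Matrix (Fin d) (Fin d) ℝ} (hA : A.IsHermitian) :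
    ∃ (V : Matrix (Fin d) (Fin d) ℝ) (p : Fin d → ℝ),
      Vᵀ * V = 1 ∧ A = V * diagonal p * Vᵀ := by
  refine ⟨hA.eigenvectorUnitary, hA.eigenvalues, ?_, ?_⟩
  · simpa [star_eq_conjTranspose] using Unitary.coe_star_mul_self hA.eigenvectorUnitary
  · conv_lhs => rw [hA.spectral_theorem]
    rw [Unitary.conjStarAlgAut_apply]
    simp only [star_eq_conjTranspose, conjTranspose_eq_transpose_of_trivial]
    rfl

/-- The entrywise square of an orthogonal matrix is doubly stochastic. -/
lemma sq_mem_doublyStochastic {d : ℕ} {W : Matrix (Fin d) (Fin d) ℝ} (hW : Wᵀ * W = 1) :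
    (of fun i j => W i j ^ 2) ∈ doublyStochastic ℝ (Fin d) := by
  rw [mem_doublyStochastic_iff_sum]
  refine ⟨fun i j => sq_nonneg _, fun i => ?_, fun j => ?_⟩
  · have hW' : W * Wᵀ = 1 := mul_eq_one_comm.mp hW
    have := congrFun (congrFun hW' i) i
    simpa [mul_apply, sq] using this
  · have := congrFun (congrFun hW j) j
    simpa [mul_apply, sq] using this

/-- By Birkhoff's theorem, a doubly stochastic matrix sends `p` to a convex combination
of rearrangements of `p`. -/
lemma mulVec_mem_of_mem_doublyStochastic {d : ℕ} {K : Set (Fin d → ℝ)} (hK : IsSymmSet K)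
    (hconv : Convex ℝ K) {M : Matrix (Fin d) (Fin d) ℝ} (hM : M ∈ doublyStochastic ℝ (Fin d))
    {p : Fin d → ℝ} (hp : p ∈ K) : M *ᵥ p ∈ K := by
  obtain ⟨w, hw0, hw1, rfl⟩ := exists_eq_sum_perm_of_mem_doublyStochastic hM
  rw [sum_mulVec]
  simp only [smul_mulVec, permMatrix_mulVec]
  exact hconv.sum_mem (fun σ _ => hw0 σ) hw1 fun σ _ => (hK.comp_mem_iff σ p).2 hp

/-- With `W = Vᵀ U`, the Frobenius product of `U diag(a) Uᵀ` and `V diag(b) Vᵀ` is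
`∑ i, b i * ∑ j, W i j ^ 2 * a j`. -/
lemma trace_conj_diagonal_mul {d : ℕ} (U V : Matrix (Fin d) (Fin d) ℝ) (a b : Fin d → ℝ) :
    ((U * diagonal a * Uᵀ) * (V * diagonal b * Vᵀ)).trace =
      ∑ i, b i * ((of fun i j => (Vᵀ * U) i j ^ 2) *ᵥ a) i := by
  have h : ((U * diagonal a * Uᵀ) * (V * diagonal b * Vᵀ)).trace =
      (diagonal b * ((Vᵀ * U) * diagonal a * (Vᵀ * U)ᵀ)).trace := by
    rw [show (U * diagonal a * Uᵀ) * (V * diagonal b * Vᵀ) =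
      (U * diagonal a * Uᵀ * V) * (diagonal b * Vᵀ) by simp only [Matrix.mul_assoc],
      trace_mul_comm]
    simp only [Matrix.mul_assoc, transpose_mul, transpose_transpose]
  rw [h, trace]
  refine sum_congr rfl fun i _ => ?_
  rw [diag_apply, diagonal_mul, mul_apply, mulVec, dotProduct]
  congr 1
  refine sum_congr rfl fun j _ => ?_
  rw [mul_diagonal, transpose_apply, of_apply]
  ring

/-- For a closed symmetric convex set `K ⊆ ℝ^d`,
`(Λ(K))° = Λ(K°)`. -/
theorem polar_spectralSet {d : ℕ} (hd : 1 ≤ d) (K : Set (Fin d → ℝ))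
    (hsymm : IsSymmSet K) (hconv : Convex ℝ K) (hclosed : IsClosed K) :
    polarMat (SpectralSet K) = SpectralSet (polarVec K) := by
  ext B
  by_cases hB : B.IsHermitian
  swap
  · exact iff_of_false (fun h => hB h.1) (fun h => hB h.1)
  obtain ⟨V, b, hV, rfl⟩ := exists_conj_diagonal hB
  rw [mem_spectralSet_conj_diagonal hsymm.polar_symm hV]
  constructor
  · intro h p hp
    -- Test against the matrix with eigenvalues `p` diagonalized by the same `V`.
    have := h.2 _ ((mem_spectralSet_conj_diagonal hsymm hV p).2 hp)
    rw [trace_conj_diagonal_mul, hV] at this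
    convert this using 4 with i
    simp [mulVec, dotProduct, one_apply]
  · refine fun hb => ⟨hB, fun A hA => ?_⟩
    obtain ⟨U, a, hU, rfl⟩ := exists_conj_diagonal hA.1
    rw [mem_spectralSet_conj_diagonal hsymm hU] at hA
    rw [trace_conj_diagonal_mul]
    refine hb _ (mulVec_mem_of_mem_doublyStochastic hsymm hconv (sq_mem_doublyStochastic ?_) hA)
    rw [transpose_mul, transpose_transpose, Matrix.mul_assoc, ← Matrix.mul_assoc V,
      mul_eq_one_comm.mp hV, Matrix.one_mul, hU]
end

section
/- Let d ≥ 1 and let K, L ⊆ ℝ^d be symmetric convex bodies (compact convex sets). Then the spectral set of the Minkowski sum equals the Minkowski sum of the spectral sets: Λ(K + L) = Λ(K) + Λ(L). -/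
/-!
Diagonalize everything and use Birkhoff's theorem. If `W` is orthogonal, the diagonal of
`W * diagonal p * Wᵀ` is `M *ᵥ p`, where `M i j = W i j ^ 2` is doubly stochastic, hence a convex
combination of permutations of `p`; so it stays in any symmetric convex set containing `p`
(`diag_conj_mem`). Since the eigenvalues of a symmetric matrix are themselves the diagonal of such
a conjugate, `A ∈ SpectralSet K` exactly when `A = U * diagonal p * Uᵀ` for some orthogonal `U` and
some `p ∈ K` (`mem_spectralSet_iff`).

For `⊆`, write `A = U * diagonal (p + q) * Uᵀ` and split the diagonal. For `⊇`, the eigenvalues of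
`A + B` are the diagonal of `Uᵀ * A * U` plus that of `Uᵀ * B * U`, with `U` diagonalizing `A + B`,
and these two diagonals lie in `K` and `L`.
-/

open Matrix Finset Pointwise

theorem IsSymmSet.comp_mem {d : ℕ} {K : Set (Fin d → ℝ)} (hK : IsSymmSet K)
    {p : Fin d → ℝ} (hp : p ∈ K) (σ : Equiv.Perm (Fin d)) : p ∘ σ ∈ K :=
  hK σ ▸ Set.mem_image_of_mem (fun p => p ∘ σ) hp

theorem IsSymmSet.add {d : ℕ} {K L : Set (Fin d → ℝ)} (hK : IsSymmSet K) (hL : IsSymmSet L) :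
    IsSymmSet (K + L) := by
  intro σ
  apply Set.Subset.antisymm
  · rintro _ ⟨_, ⟨p, hp, q, hq, rfl⟩, rfl⟩
    exact ⟨p ∘ σ, hK.comp_mem hp σ, q ∘ σ, hL.comp_mem hq σ, rfl⟩
  · rintro _ ⟨p, hp, q, hq, rfl⟩
    refine ⟨p ∘ σ.symm + q ∘ σ.symm,
      ⟨_, hK.comp_mem hp σ.symm, _, hL.comp_mem hq σ.symm, rfl⟩, ?_⟩
    ext i
    simp

/-- The ordering of the eigenvalues is irrelevant for membership in a symmetric set. -/
theorem eigVec_mem_iff {d : ℕ} {K : Set (Fin d → ℝ)} (hK : IsSymmSet K)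
    {A : Matrix (Fin d) (Fin d) ℝ} (hA : A.IsHermitian) :
    eigVec A ∈ K ↔ hA.eigenvalues ∈ K := by
  have h : eigVec A = hA.eigenvalues ∘ (Fin.revPerm.trans (Tuple.sort hA.eigenvalues)) := by
    rw [eigVec, dif_pos hA]
    rfl
  rw [h]
  refine ⟨fun hm => ?_, fun hm => hK.comp_mem hm _⟩
  have hback := hK.comp_mem hm (Fin.revPerm.trans (Tuple.sort hA.eigenvalues)).symm
  rwa [Function.comp_assoc, Equiv.self_comp_symm, Function.comp_id] at hback

/-- By Birkhoff's theorem, a symmetric convex set is stable under doubly stochastic matrices. -/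
theorem mulVec_mem_of_doublyStochastic {d : ℕ} {K : Set (Fin d → ℝ)} (hK : IsSymmSet K)
    (hKc : Convex ℝ K) {M : Matrix (Fin d) (Fin d) ℝ} (hM : M ∈ doublyStochastic ℝ (Fin d))
    {p : Fin d → ℝ} (hp : p ∈ K) : M *ᵥ p ∈ K := by
  obtain ⟨w, hw0, hw1, rfl⟩ := exists_eq_sum_perm_of_mem_doublyStochastic hM
  rw [Matrix.sum_mulVec]
  simp only [Matrix.smul_mulVec, Matrix.permMatrix_mulVec]
  exact hKc.sum_mem (fun σ _ => hw0 σ) hw1 (fun σ _ => hK.comp_mem hp σ)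

/-- The easy half of the Schur–Horn theorem: the diagonal of an orthogonal conjugate of
`diagonal p` is the image of `p` under the doubly stochastic matrix with entries `W i j ^ 2`. -/
theorem diag_conj_mem {d : ℕ} {K : Set (Fin d → ℝ)} (hK : IsSymmSet K) (hKc : Convex ℝ K)
    {W : Matrix (Fin d) (Fin d) ℝ} (hW : W * Wᵀ = 1) {p : Fin d → ℝ} (hp : p ∈ K) :
    (W * diagonal p * Wᵀ).diag ∈ K := by
  have hW' : Wᵀ * W = 1 := mul_eq_one_comm.mp hW
  have hM : (Matrix.of fun i j => W i j ^ 2) ∈ doublyStochastic ℝ (Fin d) := by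
    refine mem_doublyStochastic_iff_sum.mpr ⟨fun i j => sq_nonneg _, fun i => ?_, fun j => ?_⟩
    · have h := congrFun (congrFun hW i) i
      simpa [Matrix.mul_apply, sq] using h
    · have h := congrFun (congrFun hW' j) j
      simpa [Matrix.mul_apply, sq] using h
  convert mulVec_mem_of_doublyStochastic hK hKc hM hp using 1
  ext i
  simp only [diag_apply, Matrix.mul_apply (M := W * diagonal p), mul_diagonal, transpose_apply,
    mulVec, dotProduct, of_apply]
  exact Finset.sum_congr rfl fun j _ => by ring

theorem exists_orthogonal_diagonalization {d : ℕ} {A : Matrix (Fin d) (Fin d) ℝ}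
    (hA : A.IsHermitian) :
    ∃ U : Matrix (Fin d) (Fin d) ℝ, U * Uᵀ = 1 ∧ A = U * diagonal hA.eigenvalues * Uᵀ := by
  refine ⟨hA.eigenvectorUnitary, ?_, ?_⟩
  · have h := Unitary.coe_mul_star_self hA.eigenvectorUnitary
    simpa [Matrix.star_eq_conjTranspose] using h
  · have h := hA.spectral_theorem
    rw [Unitary.conjStarAlgAut_apply, Matrix.star_eq_conjTranspose,
      conjTranspose_eq_transpose_of_trivial] at h
    exact h

theorem eq_diag_of_eq_conj {d : ℕ} {U A : Matrix (Fin d) (Fin d) ℝ} {v : Fin d → ℝ}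
    (hU : U * Uᵀ = 1) (h : A = U * diagonal v * Uᵀ) : v = (Uᵀ * A * U).diag := by
  have hU' : Uᵀ * U = 1 := mul_eq_one_comm.mp hU
  have : Uᵀ * A * U = (Uᵀ * U) * diagonal v * (Uᵀ * U) := by
    rw [h]; simp only [Matrix.mul_assoc]
  rw [this, hU', Matrix.one_mul, Matrix.mul_one, diag_diagonal]

/-- The diagonal of a conjugate `Vᵀ * (U * diagonal p * Uᵀ) * V` is again covered by
`diag_conj_mem`, since `Vᵀ * U` is orthogonal. -/
theorem diag_conj_conj_mem {d : ℕ} {K : Set (Fin d → ℝ)} (hK : IsSymmSet K) (hKc : Convex ℝ K)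
    {U V : Matrix (Fin d) (Fin d) ℝ} (hU : U * Uᵀ = 1) (hV : V * Vᵀ = 1)
    {p : Fin d → ℝ} (hp : p ∈ K) :
    (Vᵀ * (U * diagonal p * Uᵀ) * V).diag ∈ K := by
  have hW : (Vᵀ * U) * (Vᵀ * U)ᵀ = 1 := by
    rw [transpose_mul, transpose_transpose, Matrix.mul_assoc, ← Matrix.mul_assoc U, hU,
      Matrix.one_mul, mul_eq_one_comm.mp hV]
  convert diag_conj_mem hK hKc hW hp using 2
  simp only [transpose_mul, transpose_transpose, Matrix.mul_assoc]

/-- Spectral sets of symmetric convex sets consist of the orthogonal conjugates of the diagonal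
matrices with diagonal in the set. -/
theorem mem_spectralSet_iff {d : ℕ} {K : Set (Fin d → ℝ)} (hK : IsSymmSet K)
    (hKc : Convex ℝ K) {A : Matrix (Fin d) (Fin d) ℝ} :
    A ∈ SpectralSet K ↔
      ∃ U : Matrix (Fin d) (Fin d) ℝ, U * Uᵀ = 1 ∧ ∃ p ∈ K, A = U * diagonal p * Uᵀ := by
  constructor
  · rintro ⟨hA, hm⟩
    obtain ⟨U, hU, h⟩ := exists_orthogonal_diagonalization hA
    exact ⟨U, hU, _, (eigVec_mem_iff hK hA).mp hm, h⟩
  · rintro ⟨U, hU, p, hp, rfl⟩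
    have hA : (U * diagonal p * Uᵀ).IsHermitian := by
      rw [Matrix.IsHermitian, conjTranspose_eq_transpose_of_trivial]
      simp [Matrix.mul_assoc]
    refine ⟨hA, (eigVec_mem_iff hK hA).mpr ?_⟩
    obtain ⟨V, hV, h⟩ := exists_orthogonal_diagonalization hA
    rw [eq_diag_of_eq_conj hV h]
    exact diag_conj_conj_mem hK hKc hU hV hp

/-- For symmetric convex bodies `K, L ⊆ ℝ^d`,
`Λ(K + L) = Λ(K) + Λ(L)` (Minkowski sums). -/
theorem spectralSet_add {d : ℕ} (hd : 1 ≤ d) (K L : Set (Fin d → ℝ))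
    (hKsymm : IsSymmSet K) (hKconv : Convex ℝ K) (hKcomp : IsCompact K)
    (hLsymm : IsSymmSet L) (hLconv : Convex ℝ L) (hLcomp : IsCompact L) :
    SpectralSet (K + L) = SpectralSet K + SpectralSet L := by
  have hKLsymm := hKsymm.add hLsymm
  have hKLconv := hKconv.add hLconv
  apply Set.Subset.antisymm
  · intro A hA
    obtain ⟨U, hU, _, ⟨p, hp, q, hq, rfl⟩, rfl⟩ := (mem_spectralSet_iff hKLsymm hKLconv).mp hA
    refine ⟨U * diagonal p * Uᵀ, (mem_spectralSet_iff hKsymm hKconv).mpr ⟨U, hU, p, hp, rfl⟩,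
      U * diagonal q * Uᵀ, (mem_spectralSet_iff hLsymm hLconv).mpr ⟨U, hU, q, hq, rfl⟩, ?_⟩
    change _ + _ = U * diagonal (fun i => p i + q i) * Uᵀ
    rw [← diagonal_add, Matrix.mul_add, Matrix.add_mul]
  · rintro _ ⟨A, hA, B, hB, rfl⟩
    have hAB : (A + B).IsHermitian := hA.1.add hB.1
    obtain ⟨U, hU, p, hp, rfl⟩ := (mem_spectralSet_iff hKsymm hKconv).mp hA
    obtain ⟨V, hV, q, hq, rfl⟩ := (mem_spectralSet_iff hLsymm hLconv).mp hB
    refine ⟨hAB, (eigVec_mem_iff hKLsymm hAB).mpr ?_⟩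
    obtain ⟨X, hX, h⟩ := exists_orthogonal_diagonalization hAB
    rw [eq_diag_of_eq_conj hX h, Matrix.mul_add, Matrix.add_mul, diag_add]
    exact Set.add_mem_add (diag_conj_conj_mem hKsymm hKconv hU hX hp)
      (diag_conj_conj_mem hLsymm hLconv hV hX hq)
end
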